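/- Let N ≥ 1, let w : ℝ → ℝ be continuous and strictly positive on (−1,1) and integrable on [−1,1], let P_N be a polynomial of degree N orthogonal (with respect to w) to all polynomials of degree at most N−1, let t_1 < … < t_N be its roots in (−1,1), and let w_k := ∫_{−1}^{1} w(t) ℓ_k(t) dt be the Gauss weights, where ℓ_k is the Lagrange basis polynomial of the nodes. Then for all polynomials p and q of degree at most N−1: ∫_{−1}^{1} w(t) p(t) q(t) dt = Σ_{k=1}^{N} w_k p(t_k) q(t_k). That is, the N-point Gauss quadrature computes the weighted L² inner product of any two polynomials of degree at most N−1 exactly. -/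

import Mathlib

/-!
An `N`-point Gauss rule is exact for every polynomial `f` of degree below `2 * N`. Dividing,
`f = P * (f / P) + f % P`. The quotient has degree below `N`, so orthogonality makes the integral
of `w * P * (f / P)` vanish, and `P` vanishes at the nodes, so the sum does not see this term
either. The remainder has degree below `N`, hence equals its Lagrange interpolant at the nodes,
and integrating the interpolant against `w` produces the Gauss weights. The theorem is the case
`f = p * q`, of degree at most `2 * N - 2`.
-/

open MeasureTheory intervalIntegral

theorem intervalIntegrable_mul_eval {w : ℝ → ℝ} {a b : ℝ}
    (hw : IntervalIntegrable w volume a b) (f : Polynomial ℝ) :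
    IntervalIntegrable (fun s => w s * f.eval s) volume a b :=
  hw.mul_continuousOn f.continuous.continuousOn

/-- A quadrature rule whose weights are the integrals of the Lagrange basis polynomials is exact
on polynomials of degree below the number of nodes. -/
theorem integral_mul_eval_eq_sum_of_degree_lt {N : ℕ} {w : ℝ → ℝ} {a b : ℝ}
    (hw : IntervalIntegrable w volume a b) {t : Fin N → ℝ} (ht : Function.Injective t)
    {f : Polynomial ℝ} (hf : f.degree < N) :
    ∫ s in a..b, w s * f.eval s
      = ∑ k, (∫ s in a..b, w s * (Lagrange.basis Finset.univ t k).eval s) * f.eval (t k) := by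
  have hinterp := Lagrange.eq_interpolate (s := Finset.univ) (v := t) ht.injOn
    (f := f) (by simpa using hf)
  have heval : ∀ s, w s * f.eval s
      = ∑ k, w s * (Lagrange.basis Finset.univ t k).eval s * f.eval (t k) := by
    intro s
    conv_lhs => rw [hinterp]
    simp only [Lagrange.interpolate_apply, Polynomial.eval_finsetSum, Polynomial.eval_mul,
      Polynomial.eval_C, Finset.mul_sum]
    exact Finset.sum_congr rfl fun k _ => by ring
  simp_rw [heval]
  rw [intervalIntegral.integral_finsetSum
    (f := fun k s => w s * (Lagrange.basis Finset.univ t k).eval s * f.eval (t k)) fun k _ =>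
    (intervalIntegrable_mul_eval hw _).mul_const _]
  exact Finset.sum_congr rfl fun k _ => intervalIntegral.integral_mul_const _ _

/-- `N`-point Gauss quadrature computes the weighted `L²` inner product of any two
polynomials of degree at most `N-1` exactly. -/
theorem gauss_quadrature_inner_product_exact
    (N : ℕ) (hN : 1 ≤ N)
    (w : ℝ → ℝ)
    (hw_cont : ContinuousOn w (Set.Ioo (-1 : ℝ) 1))
    (hw_pos : ∀ t ∈ Set.Ioo (-1 : ℝ) 1, 0 < w t)
    (hw_int : IntervalIntegrable w volume (-1 : ℝ) 1)
    (P : Polynomial ℝ) (hPdeg : P.natDegree = N)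
    (horth : ∀ r : Polynomial ℝ, r.natDegree < N →
      ∫ t in (-1 : ℝ)..1, w t * P.eval t * r.eval t = 0)
    (t : Fin N → ℝ) (ht_mono : StrictMono t)
    (ht_mem : ∀ i, t i ∈ Set.Ioo (-1 : ℝ) 1)
    (ht_roots : P.roots = (Finset.univ.val : Multiset (Fin N)).map t)
    (gw : Fin N → ℝ)
    (hgw : ∀ k, gw k = ∫ s in (-1 : ℝ)..1, w s * (Lagrange.basis Finset.univ t k).eval s) :
    ∀ p q : Polynomial ℝ, p.natDegree < N → q.natDegree < N →
      ∫ s in (-1 : ℝ)..1, w s * p.eval s * q.eval s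
        = ∑ k, gw k * p.eval (t k) * q.eval (t k) := by
  intro p q hp hq
  have hP0 : P ≠ 0 := by
    rintro rfl
    simp at hPdeg
    omega
  have hroot : ∀ k, P.eval (t k) = 0 := fun k =>
    Polynomial.isRoot_of_mem_roots (by rw [ht_roots]; simp)
  -- A quotient of degree at least `N` would give `deg (p * q) = N + deg (p * q / P) ≥ 2 * N`.
  have hdiv : (p * q / P).natDegree < N := by
    have h1 := Polynomial.natDegree_mul_le (p := p) (q := q)
    by_contra hge
    have hquot0 : p * q / P ≠ 0 := by
      intro h
      rw [h, Polynomial.natDegree_zero] at hge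
      omega
    have hle : P.degree ≤ (p * q).degree := by
      rwa [Ne, Polynomial.div_eq_zero_iff hP0, not_lt] at hquot0
    have h2 := Polynomial.degree_add_div hP0 hle
    rw [← Polynomial.degree_mul] at h2
    have h3 := Polynomial.natDegree_eq_of_degree_eq h2
    rw [Polynomial.natDegree_mul hP0 hquot0] at h3
    omega
  have hmod : (p * q % P).degree < N := by
    rw [← hPdeg, ← Polynomial.degree_eq_natDegree hP0]
    exact Polynomial.degree_mod_lt _ hP0
  have heval : ∀ s, p.eval s * q.eval s
      = P.eval s * (p * q / P).eval s + (p * q % P).eval s := by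
    intro s
    rw [← Polynomial.eval_mul, ← Polynomial.eval_mul, ← Polynomial.eval_add,
      EuclideanDomain.div_add_mod]
  have hquot : IntervalIntegrable (fun s => w s * P.eval s * (p * q / P).eval s)
      volume (-1 : ℝ) 1 := by
    simpa only [Polynomial.eval_mul, mul_assoc]
      using intervalIntegrable_mul_eval hw_int (P * (p * q / P))
  simp only [mul_assoc (w _), mul_assoc (gw _), heval, hroot, zero_mul, zero_add, mul_add]
  simp only [← mul_assoc (w _)]
  rw [intervalIntegral.integral_add (f := fun s => w s * P.eval s * (p * q / P).eval s)
    (g := fun s => w s * (p * q % P).eval s) hquot (intervalIntegrable_mul_eval hw_int _),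
    horth _ hdiv, zero_add, integral_mul_eval_eq_sum_of_degree_lt hw_int ht_mono.injective hmod]
  simp only [hgw]
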